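/- arXiv:2107.02379 — 2 statements merged into one kernel-verified Lean document; each statement's English description precedes it below -/
import Mathlib

section
/- Let G(V,E) be a chordal graph on V = {1,…,n} with maximal cliques C_1,…,C_t, and let Z ∈ S^n_+(E,0). Then there exist positive semidefinite matrices Z_k ∈ S^{|C_k|}_+, k = 1,…,t, such that Z = Σ_{k=1}^t E_{C_k}^T Z_k E_{C_k} and rank(Z) = Σ_{k=1}^t rank(Z_k). -/
/-!
A chordal graph has a perfect elimination order, and symmetric Gaussian elimination along such an
order creates no fill-in. Concretely, let `v` be a simplicial vertex, with row `z = Z v` and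
diagonal entry `a = Z v v`. If `a = 0` then `z = 0` by positivity and `v` can be dropped. Otherwise
`z` is supported on the clique formed by the neighbours of `v`, so `a⁻¹ • z zᵀ` fits into one block,
and `Z - a⁻¹ • z zᵀ` is positive semidefinite, has the same sparsity, no longer involves `v`, and has
smaller rank (`pivot_posSemidef`, `rank_pivot_lt`). Induction on the vertex set
(`exists_decomposition`) gives blocks on the maximal cliques whose ranks sum to at most `rank Z`; the
reverse inequality is subadditivity of the rank.

The existence of a simplicial vertex is Dirac's theorem. It is proved by showing that every `v` not
adjacent to all of `S` has a simplicial non-neighbour (`exists_simplicial_nonadj`): take a component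
`M` of the complement of the closed neighbourhood of `v`. Its boundary is a clique, because a
shortest path through `M` between two nonadjacent boundary vertices would close up through `v` to a
chordless cycle (`adj_of_joined`). Induction applied to `M` with its boundary then yields a
simplicial vertex that lies in `M`.
-/

open Finset Matrix

/-- The edge relation is symmetric. -/
def EdgeSymm {V : Type*} (E : V → V → Prop) : Prop := ∀ i j, E i j → E j i

/-- Every vertex has a self-loop. -/
def HasSelfLoops {V : Type*} (E : V → V → Prop) : Prop := ∀ i, E i i

/-- A clique: a finite set of pairwise adjacent vertices. -/
def IsGraphClique {V : Type*} (E : V → V → Prop) (C : Finset V) : Prop :=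
  ∀ i ∈ C, ∀ j ∈ C, E i j

/-- A maximal clique: a clique not properly contained in any other clique. -/
def IsMaximalGraphClique {V : Type*} (E : V → V → Prop) (C : Finset V) : Prop :=
  IsGraphClique E C ∧ ∀ D : Finset V, IsGraphClique E D → C ⊆ D → D = C

/-- Chordality: every cycle of length at least 4 (given by an injective map
`c : Fin (k+4) → V` whose cyclically consecutive vertices are adjacent) has a chord,
i.e. an edge joining two distinct, nonconsecutive vertices of the cycle. -/
def IsChordalRel {V : Type*} (E : V → V → Prop) : Prop :=
  ∀ (k : ℕ) (c : Fin (k + 4) → V), Function.Injective c →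
    (∀ i, E (c i) (c (i + 1))) →
    ∃ i j : Fin (k + 4), i ≠ j ∧ j ≠ i + 1 ∧ i ≠ j + 1 ∧ E (c i) (c j)

/-- `X ∈ S^n(E,0)`: symmetric with sparsity pattern `E`. -/
def HasSparsity {n : ℕ} (E : Fin n → Fin n → Prop) (X : Matrix (Fin n) (Fin n) ℝ) : Prop :=
  X.IsSymm ∧ ∀ i j, ¬ E i j → X i j = 0

/-- The 0/1 matrix `E_C ∈ R^{|C| × n}` with `(E_C)_{ij} = 1` iff the `i`-th element of `C`
(in increasing order) equals `j`. -/
def cliqueMat {n : ℕ} (C : Finset (Fin n)) : Matrix (Fin C.card) (Fin n) ℝ :=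
  Matrix.of fun i j => if (↑(C.orderIsoOfFin rfl i) : Fin n) = j then 1 else 0

/-- `X ∈ S^n_+(E,?)`: `X` admits a positive semidefinite completion. -/
def HasPSDCompletion {n : ℕ} (E : Fin n → Fin n → Prop) (X : Matrix (Fin n) (Fin n) ℝ) : Prop :=
  ∃ Xb : Matrix (Fin n) (Fin n) ℝ, Xb.PosSemidef ∧ ∀ i j, E i j → Xb i j = X i j

/-! ### Simplicial vertices in chordal graphs -/

/-- An induced path: among all walks from `x` to `y` inside `A`, a shortest one has no chord and
repeats no vertex. -/
lemma exists_induced_path {V : Type*} (E : V → V → Prop)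
    (A : Set V) {x y : V} (hxy : x ≠ y)
    (h : Relation.ReflTransGen (fun u w => E u w ∧ u ∈ A ∧ w ∈ A) x y) :
    ∃ (m : ℕ) (p : ℕ → V), p 0 = x ∧ p m = y ∧ (∀ i ≤ m, p i ∈ A) ∧
      (∀ i < m, E (p i) (p (i + 1))) ∧ (∀ i j, i + 1 < j → j ≤ m → ¬ E (p i) (p j)) ∧
      (∀ i j, i < j → j ≤ m → p i ≠ p j) := by
  classical
  have hex : ∃ (m : ℕ) (p : ℕ → V), p 0 = x ∧ p m = y ∧ (∀ i ≤ m, p i ∈ A) ∧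
      (∀ i < m, E (p i) (p (i + 1))) := by
    have hxA : x ∈ A := by
      rcases Relation.ReflTransGen.cases_head h with h | ⟨_, h, _⟩
      · exact absurd h hxy
      · exact h.2.1
    clear hxy
    induction h with
    | refl => exact ⟨0, fun _ => x, rfl, rfl, fun _ _ => hxA, by simp⟩
    | @tail b c _ hbc ih =>
      obtain ⟨m, p, h0, hm, hA, hE⟩ := ih
      refine ⟨m + 1, fun i => if i ≤ m then p i else c, by simpa using h0, by simp, ?_, ?_⟩
      · intro i _
        by_cases him : i ≤ m
        · simpa [him] using hA i him
        · simpa [him] using hbc.2.2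
      · intro i hi
        by_cases him : i + 1 ≤ m
        · simpa [him, show i ≤ m by omega] using hE i (by omega)
        · obtain rfl : i = m := by omega
          simpa [hm] using hbc.1
  have hmin := fun m' (hm' : m' < Nat.find hex) => Nat.find_min hex hm'
  obtain ⟨p, h0, hm, hA, hE⟩ := Nat.find_spec hex
  generalize Nat.find hex = m at *
  have hchord : ∀ i j, i + 1 < j → j ≤ m → ¬ E (p i) (p j) := by
    intro i j hij hjm hEij
    refine hmin (m - (j - i - 1)) (by omega)
      ⟨fun s => if s ≤ i then p s else p (s + (j - i - 1)), by simpa using h0, ?_, ?_, ?_⟩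
    · have : ¬ (m - (j - i - 1) ≤ i) := by omega
      simp only [this, if_false]
      rw [show m - (j - i - 1) + (j - i - 1) = m by omega, hm]
    · intro s hs
      dsimp only
      split_ifs
      · exact hA _ (by omega)
      · exact hA _ (by omega)
    · intro s hs
      rcases lt_trichotomy s i with h | h | h
      · simpa [show s ≤ i by omega, show s + 1 ≤ i by omega] using hE s (by omega)
      · subst h
        simpa [show s + 1 + (j - s - 1) = j by omega] using hEij
      · simp only [show ¬ s ≤ i by omega, show ¬ s + 1 ≤ i by omega, if_false]
        rw [show s + 1 + (j - i - 1) = s + (j - i - 1) + 1 by omega]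
        exact hE _ (by omega)
  refine ⟨m, p, h0, hm, hA, hE, hchord, ?_⟩
  intro i j hij hjm heq
  rcases Nat.lt_or_ge j m with hj | hj
  · exact hchord i (j + 1) (by omega) (by omega) (heq ▸ hE j hj)
  · obtain rfl : j = m := by omega
    rcases Nat.eq_zero_or_pos i with hi | hi
    · subst hi
      exact hxy (by rw [← h0, heq, hm])
    · refine hchord (i - 1) j (by omega) le_rfl ?_
      have := hE (i - 1) (by omega)
      rwa [show i - 1 + 1 = i by omega, heq] at this

/-- Two neighbours `x`, `y` of `v` joined by a walk whose other vertices are not adjacent to `v`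
must be adjacent: an induced path from `x` to `y` would close up through `v` to a chordless
cycle. -/
lemma adj_of_joined {V : Type*} {E : V → V → Prop} (hsymm : EdgeSymm E) (hloop : HasSelfLoops E)
    (hch : IsChordalRel E) {v x y : V} (M : Set V) (hM : ∀ w ∈ M, ¬ E v w)
    (hvx : E v x) (hvy : E v y)
    (h : Relation.ReflTransGen
      (fun u w => E u w ∧ u ∈ insert x (insert y M) ∧ w ∈ insert x (insert y M)) x y) :
    E x y := by
  by_contra hxy
  have hne : x ≠ y := fun h => hxy (h ▸ hloop x)
  have hvx' : v ≠ x := fun h => hxy (h ▸ hvy)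
  have hvy' : v ≠ y := fun h => hxy (hsymm _ _ (h ▸ hvx))
  obtain ⟨m, p, h0, hm, hA, hE, hchord, hinj⟩ := exists_induced_path E _ hne h
  have hm2 : 2 ≤ m := by
    by_contra hlt
    obtain rfl | rfl : m = 0 ∨ m = 1 := by omega
    · exact hne (h0 ▸ hm)
    · exact hxy (by simpa [h0, hm] using hE 0 (by omega))
  obtain ⟨k, rfl⟩ : ∃ k, m = k + 2 := ⟨m - 2, by omega⟩
  have hint : ∀ i, 0 < i → i < k + 2 → ¬ E v (p i) := by
    intro i hi0 hi
    rcases hA i hi.le with h | h | h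
    · exact absurd (h0.trans h.symm) (hinj 0 i hi0 hi.le)
    · exact absurd (h.trans hm.symm) (hinj i _ hi le_rfl)
    · exact hM _ h
  have hvp : ∀ i ≤ k + 2, v ≠ p i := by
    intro i hi heq
    rcases Nat.eq_zero_or_pos i with h | h
    · subst h; exact hvx' (heq.trans h0)
    · rcases Nat.lt_or_ge i (k + 2) with h' | h'
      · exact hint i h h' (heq ▸ hloop v)
      · obtain rfl : i = k + 2 := by omega
        exact hvy' (heq.trans hm)
  -- The cycle `v, p 0, …, p (k + 2)`; the position of `v` is `0`.
  let c : Fin (k + 4) → V := fun i => if i.val = 0 then v else p (i.val - 1)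
  have hsucc : ∀ i : Fin (k + 4), (i + 1).val = if i.val = k + 3 then 0 else i.val + 1 := by
    intro i
    rw [Fin.val_add_one]
    simp [Fin.ext_iff]
  have hlt : ∀ i j : Fin (k + 4), i.val < j.val → c i ≠ c j := by
    intro i j hij
    have := j.isLt
    by_cases hi : i.val = 0
    · simp only [c, hi, show j.val ≠ 0 by omega, if_true, if_false]
      exact hvp (j.val - 1) (by omega)
    · simp only [c, hi, show j.val ≠ 0 by omega, if_false]
      exact hinj (i.val - 1) (j.val - 1) (by omega) (by omega)
  have hno : ∀ i j : Fin (k + 4), i.val < j.val → j ≠ i + 1 → i ≠ j + 1 → ¬ E (c i) (c j) := by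
    intro i j hij hji hij'
    have hjlt := j.isLt
    rw [Ne, Fin.ext_iff, hsucc] at hji hij'
    by_cases hi : i.val = 0
    · simp only [c, hi, show j.val ≠ 0 by omega, if_true, if_false]
      split_ifs at hji hij' <;> exact hint _ (by omega) (by omega)
    · simp only [c, hi, show j.val ≠ 0 by omega, if_false]
      split_ifs at hji hij' <;> exact hchord _ _ (by omega) (by omega)
  obtain ⟨i, j, hne, hji, hij, hEij⟩ := hch k c
    (by
      intro i j hij
      by_contra hne
      rcases lt_or_gt_of_ne (fun h => hne (Fin.ext h) : i.val ≠ j.val) with h | h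
      · exact hlt i j h hij
      · exact hlt j i h hij.symm)
    (by
      intro i
      have hilt := i.isLt
      have hs := hsucc i
      by_cases hi : i.val = 0
      · have : (i + 1).val = 1 := by rw [hs, if_neg (by omega), hi]
        simp only [c, hi, this, if_true, one_ne_zero, if_false]
        simpa [h0] using hvx
      · by_cases hi' : i.val = k + 3
        · have : (i + 1).val = 0 := by rw [hs, if_pos hi']
          simp only [c, hi', this, if_true]
          simpa [hm] using hsymm _ _ hvy
        · have h1 : (i + 1).val = i.val + 1 := by rw [hs, if_neg hi']
          have := hE (i.val - 1) (by omega)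
          rw [show i.val - 1 + 1 = i.val by omega] at this
          simp only [c, hi, h1, if_false, Nat.succ_ne_zero, Nat.add_sub_cancel]
          exact this)
  rcases lt_or_gt_of_ne (fun h => hne (Fin.ext h) : i.val ≠ j.val) with h | h
  · exact hno i j h hji hij hEij
  · exact hno j i h hij hji (hsymm _ _ hEij)

/-- `s` is simplicial in the subgraph induced on `S`: its neighbours in `S` form a clique. -/
def IsSimplicialIn {V : Type*} (E : V → V → Prop) (S : Finset V) (s : V) : Prop :=
  ∀ a ∈ S, ∀ b ∈ S, E s a → E s b → E a b

/-- Dirac's theorem, in a form suited to induction: a vertex `v` that is not adjacent to all of `S`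
has a non-neighbour that is simplicial in `S`. -/
lemma exists_simplicial_nonadj {V : Type*} {E : V → V → Prop} (hsymm : EdgeSymm E)
    (hloop : HasSelfLoops E) (hch : IsChordalRel E) (S : Finset V) :
    ∀ v ∈ S, ∀ u ∈ S, ¬ E v u → ∃ s ∈ S, ¬ E v s ∧ IsSimplicialIn E S s := by
  classical
  induction S using Finset.strongInduction with
  | H S ih =>
  intro v hv u hu hvu
  -- `M` is the connected component of `u` in `S` minus the closed neighbourhood of `v`.
  let R : V → V → Prop := fun x w => E x w ∧ w ∈ S ∧ ¬ E v w
  let M : Set V := {w | Relation.ReflTransGen R u w}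
  have huM : u ∈ M := Relation.ReflTransGen.refl
  have hMS : ∀ w ∈ M, w ∈ S ∧ ¬ E v w := by
    intro w hw
    rcases Relation.ReflTransGen.cases_tail hw with h | ⟨_, _, h⟩
    · exact h ▸ ⟨hu, hvu⟩
    · exact h.2
  have hMcl : ∀ w ∈ M, ∀ x ∈ S, E w x → ¬ E v x → x ∈ M :=
    fun w hw x hx hwx hvx => Relation.ReflTransGen.tail hw ⟨hwx, hx, hvx⟩
  -- `T` adds to `M` its boundary `T \ M`, which consists of neighbours of `v` and is a clique.
  let T : Finset V := S.filter fun x => ∃ m ∈ M, E m x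
  have hTmem : ∀ x, x ∈ T ↔ x ∈ S ∧ ∃ m ∈ M, E m x := fun x => by simp [T]
  have hMT : ∀ w ∈ M, w ∈ T := fun w hw => (hTmem w).2 ⟨(hMS w hw).1, w, hw, hloop w⟩
  have hTS : T ⊂ S := by
    refine (Finset.ssubset_iff_of_subset (Finset.filter_subset _ _)).2 ⟨v, hv, fun h => ?_⟩
    obtain ⟨_, m, hm, hmv⟩ := (hTmem v).1 h
    exact (hMS m hm).2 (hsymm _ _ hmv)
  have hbd : ∀ x ∈ T, x ∉ M → E v x := by
    intro x hx hxM
    obtain ⟨hxS, m, hm, hmx⟩ := (hTmem x).1 hx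
    by_contra hvx
    exact hxM (hMcl m hm x hxS hmx hvx)
  have hclique : ∀ x ∈ T, x ∉ M → ∀ y ∈ T, y ∉ M → E x y := by
    intro x hx hxM y hy hyM
    refine adj_of_joined hsymm hloop hch M (fun w hw => (hMS w hw).2) (hbd x hx hxM)
      (hbd y hy hyM) ?_
    obtain ⟨_, m₁, hm₁, hx₁⟩ := (hTmem x).1 hx
    obtain ⟨_, m₂, hm₂, hy₂⟩ := (hTmem y).1 hy
    have hsub : ∀ w ∈ M, w ∈ insert x (insert y M) := fun w hw => Or.inr (Or.inr hw)
    have hconn : ∀ w ∈ M, Relation.ReflTransGen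
        (fun u w => E u w ∧ u ∈ insert x (insert y M) ∧ w ∈ insert x (insert y M)) u w := by
      intro w hw
      have hw' : Relation.ReflTransGen R u w := hw
      clear hw
      induction hw' with
      | refl => exact Relation.ReflTransGen.refl
      | @tail b c hb hbc ih' =>
        exact ih'.tail ⟨hbc.1, hsub _ hb, hsub _ (Relation.ReflTransGen.tail hb hbc)⟩
    have hsy : Std.Symm
        (fun u w => E u w ∧ u ∈ insert x (insert y M) ∧ w ∈ insert x (insert y M)) :=
      ⟨fun a b h => ⟨hsymm _ _ h.1, h.2.2, h.2.1⟩⟩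
    have h12 := (Relation.ReflTransGen.stdSymm.symm _ _ (hconn m₁ hm₁)).trans (hconn m₂ hm₂)
    exact (h12.tail ⟨hy₂, hsub _ hm₂, Or.inr (Or.inl rfl)⟩).head
      ⟨hsymm _ _ hx₁, Or.inl rfl, hsub _ hm₁⟩
  -- All neighbours in `S` of a vertex of `M` lie in `T`.
  suffices h : ∃ s ∈ M, IsSimplicialIn E T s by
    obtain ⟨s, hs, hsimp⟩ := h
    refine ⟨s, (hMS s hs).1, (hMS s hs).2, fun a ha b hb hsa hsb => ?_⟩
    exact hsimp a ((hTmem a).2 ⟨ha, s, hs, hsa⟩) b ((hTmem b).2 ⟨hb, s, hs, hsb⟩) hsa hsb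
  by_cases hall : ∀ a ∈ T, ∀ b ∈ T, E a b
  · exact ⟨u, huM, fun a ha b hb _ _ => hall a ha b hb⟩
  by_cases hK : ∃ w ∈ T, w ∉ M ∧ ∃ z ∈ T, ¬ E w z
  · obtain ⟨w, hwT, hwM, z, hz, hwz⟩ := hK
    obtain ⟨s, hs, hws, hsimp⟩ := ih T hTS w hwT z hz hwz
    exact ⟨s, by_contra fun hsM => hws (hclique w hwT hwM s hs hsM), hsimp⟩
  · push Not at hall hK
    obtain ⟨w, hwT, z, hz, hwz⟩ := hall
    obtain ⟨s, hs, hws, hsimp⟩ := ih T hTS w hwT z hz hwz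
    exact ⟨s, by_contra fun hsM => hws (hsymm _ _ (hK s hs hsM w hwT)), hsimp⟩

lemma exists_simplicial {V : Type*} {E : V → V → Prop} (hsymm : EdgeSymm E)
    (hloop : HasSelfLoops E) (hch : IsChordalRel E) (S : Finset V) (hS : S.Nonempty) :
    ∃ s ∈ S, IsSimplicialIn E S s := by
  by_cases hall : ∀ a ∈ S, ∀ b ∈ S, E a b
  · obtain ⟨s, hs⟩ := hS
    exact ⟨s, hs, fun a ha b hb _ _ => hall a ha b hb⟩
  · push Not at hall
    obtain ⟨v, hv, u, hu, hvu⟩ := hall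
    obtain ⟨s, hs, _, hsimp⟩ := exists_simplicial_nonadj hsymm hloop hch S v hv u hu hvu
    exact ⟨s, hs, hsimp⟩

/-! ### Elimination at a simplicial vertex -/

lemma rank_add_le_rank_add_rank {m : Type*} [Fintype m] (A B : Matrix m m ℝ) :
    (A + B).rank ≤ A.rank + B.rank := by
  classical
  unfold Matrix.rank
  rw [Matrix.mulVecLin_add]
  refine le_trans (Submodule.finrank_mono ?_) (Submodule.finrank_add_le_finrank_add_finrank _ _)
  rintro _ ⟨x, rfl⟩
  exact Submodule.add_mem_sup ⟨x, rfl⟩ ⟨x, rfl⟩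

lemma rank_sum_le_sum_rank {m ι : Type*} [Fintype m] (s : Finset ι) (A : ι → Matrix m m ℝ) :
    (∑ k ∈ s, A k).rank ≤ ∑ k ∈ s, (A k).rank :=
  Finset.le_sum_of_subadditive _ Matrix.rank_zero.le rank_add_le_rank_add_rank _ _

/-- One step of symmetric Gaussian elimination: subtracting `a⁻¹ • z zᵀ`, where `z` is the `v`-th
row and `a ≠ 0` the `v`-th diagonal entry. -/
noncomputable def pivot {V : Type*} (Z : Matrix V V ℝ) (v : V) : Matrix V V ℝ :=
  Z - (Z v v)⁻¹ • Matrix.vecMulVec (Z v) (Z v)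

lemma pivot_apply {V : Type*} (Z : Matrix V V ℝ) (v i j : V) :
    pivot Z v i j = Z i j - (Z v v)⁻¹ * (Z v i * Z v j) := by
  simp [pivot, Matrix.vecMulVec_apply]

/-- The pivoted form is the congruence `Pᵀ Z P` with `P = 1 - a⁻¹ • e_v zᵀ`. -/
lemma pivot_posSemidef {V : Type*} [Fintype V] {Z : Matrix V V ℝ} (hZ : Z.PosSemidef) {v : V}
    (hv : Z v v ≠ 0) : (pivot Z v).PosSemidef := by
  classical
  have hs : ∀ i j, Z i j = Z j i := fun i j => by simpa using hZ.1.apply j i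
  let P : Matrix V V ℝ := 1 - (Z v v)⁻¹ • Matrix.vecMulVec (Pi.single v 1) (Z v)
  have hPH : Pᴴ = 1 - (Z v v)⁻¹ • Matrix.vecMulVec (Z v) (Pi.single v 1) := by
    ext i j
    simp [P, Matrix.vecMulVec_apply, Matrix.one_apply, eq_comm, mul_comm]
  have hZP : Z * P = pivot Z v := by
    ext i j
    simp [P, pivot_apply, mul_sub, Matrix.mul_vecMulVec, Matrix.vecMulVec_apply, hs i v]
  have h := hZ.conjTranspose_mul_mul_same P
  rw [Matrix.mul_assoc, hZP, hPH] at h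
  convert h using 1
  ext i j
  have h0 : pivot Z v v j = 0 := by
    rw [pivot_apply]; field_simp; ring
  simp [sub_mul, Matrix.vecMulVec_mul, Matrix.vecMulVec_apply, h0]

/-- The kernel of `Z` together with `e_v`, which is not in it, lies in the kernel of the pivoted
matrix. -/
lemma rank_pivot_lt {V : Type*} [Fintype V] {Z : Matrix V V ℝ} (hZ : Z.PosSemidef) {v : V}
    (hv : Z v v ≠ 0) : (pivot Z v).rank + 1 ≤ Z.rank := by
  classical
  have hs : ∀ i j, Z i j = Z j i := fun i j => by simpa using hZ.1.apply j i
  have h1 := LinearMap.finrank_range_add_finrank_ker Z.mulVecLin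
  have h2 := LinearMap.finrank_range_add_finrank_ker (pivot Z v).mulVecLin
  have hlt : LinearMap.ker Z.mulVecLin < LinearMap.ker (pivot Z v).mulVecLin := by
    refine lt_of_le_of_ne ?_ ?_
    · intro x hx
      rw [LinearMap.mem_ker, Matrix.mulVecLin_apply] at hx ⊢
      have hxv : Z v ⬝ᵥ x = 0 := congrFun hx v
      rw [pivot, Matrix.sub_mulVec, hx, Matrix.smul_mulVec, Matrix.vecMulVec_mulVec, hxv]
      simp
    · intro heq
      have hmem : Pi.single v 1 ∈ LinearMap.ker (pivot Z v).mulVecLin := by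
        rw [LinearMap.mem_ker, Matrix.mulVecLin_apply, Matrix.mulVec_single_one]
        ext i
        rw [Matrix.col_apply, pivot_apply, hs i v]
        simp; field_simp; ring
      rw [← heq, LinearMap.mem_ker, Matrix.mulVecLin_apply, Matrix.mulVec_single_one] at hmem
      exact hv (congrFun hmem v)
  have h3 := Submodule.finrank_lt_finrank_of_lt hlt
  unfold Matrix.rank
  omega

/-! ### Assembling the decomposition -/

/-- Perfect elimination produces a decomposition into blocks supported on the cliques `C k`, with
total rank at most `rank Z`. Blocks are kept at full size here. -/
lemma exists_decomposition {V : Type*} [Fintype V] {t : ℕ} {E : V → V → Prop}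
    (hsymm : EdgeSymm E) (hloop : HasSelfLoops E) (hch : IsChordalRel E) (C : Fin t → Finset V)
    (hC : ∀ D : Finset V, IsGraphClique E D → ∃ k, D ⊆ C k) (S : Finset V) :
    ∀ Z : Matrix V V ℝ, Z.PosSemidef → (∀ i j, Z i j ≠ 0 → i ∈ S ∧ j ∈ S ∧ E i j) →
      ∃ Y : Fin t → Matrix V V ℝ, (∀ k, (Y k).PosSemidef) ∧
        (∀ k i j, Y k i j ≠ 0 → i ∈ C k ∧ j ∈ C k) ∧ Z = ∑ k, Y k ∧ ∑ k, (Y k).rank ≤ Z.rank := by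
  classical
  induction S using Finset.strongInduction with
  | H S ih =>
  intro Z hZ hsupp
  rcases S.eq_empty_or_nonempty with rfl | hS
  · have hZ0 : Z = 0 := by
      ext i j
      by_contra h
      simpa using (hsupp i j h).1
    exact ⟨fun _ => 0, fun _ => Matrix.PosSemidef.zero, by simp, by simp [hZ0], by simp⟩
  obtain ⟨v, hvS, hsimp⟩ := exists_simplicial hsymm hloop hch S hS
  have hs : ∀ i j, Z i j = Z j i := fun i j => by simpa using hZ.1.apply j i
  by_cases hv : Z v v = 0
  -- A zero diagonal entry forces a zero row, so `v` can be discarded.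
  · have hrow : ∀ j, Z v j = 0 := by
      have h := (hZ.dotProduct_mulVec_zero_iff (Pi.single v 1)).1 (by simp [hv])
      intro j
      rw [hs]
      simpa using congrFun h j
    refine ih _ (Finset.erase_ssubset hvS) Z hZ fun i j hij => ?_
    obtain ⟨hi, hj, hE⟩ := hsupp i j hij
    refine ⟨Finset.mem_erase.2 ⟨?_, hi⟩, Finset.mem_erase.2 ⟨?_, hj⟩, hE⟩
    · rintro rfl; exact hij (hrow j)
    · rintro rfl; exact hij (hs i j ▸ hrow i)
  -- Otherwise pivot at `v`. Row `v` is supported on a clique since `v` is simplicial, so pivoting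
  -- creates no fill-in and the rank-one term fits into some block `k₀`.
  · have hnbr : ∀ i j, Z v i ≠ 0 → Z v j ≠ 0 → i ∈ S ∧ j ∈ S ∧ E i j := fun i j hi hj =>
      have hi' := hsupp v i hi
      have hj' := hsupp v j hj
      ⟨hi'.2.1, hj'.2.1, hsimp i hi'.2.1 j hj'.2.1 hi'.2.2 hj'.2.2⟩
    obtain ⟨Y, hY, hYsupp, hYsum, hYrank⟩ := ih _ (Finset.erase_ssubset hvS) (pivot Z v)
      (pivot_posSemidef hZ hv) (by
        intro i j hij
        rw [pivot_apply] at hij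
        have hmem : i ∈ S ∧ j ∈ S ∧ E i j := by
          by_cases h : Z i j = 0
          · refine hnbr i j ?_ ?_ <;> intro h' <;> simp [h, h'] at hij
          · exact hsupp i j h
        refine ⟨Finset.mem_erase.2 ⟨?_, hmem.1⟩, Finset.mem_erase.2 ⟨?_, hmem.2.1⟩, hmem.2.2⟩
        · rintro rfl
          apply hij
          field_simp
          ring
        · rintro rfl
          apply hij
          rw [hs i j]
          field_simp
          ring)
    obtain ⟨k₀, hk₀⟩ := hC (Finset.univ.filter fun i => Z v i ≠ 0) (by
      intro i hi j hj
      exact (hnbr i j (by simpa using hi) (by simpa using hj)).2.2)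
    let W : Matrix V V ℝ := (Z v v)⁻¹ • Matrix.vecMulVec (Z v) (Z v)
    have hWpsd : W.PosSemidef := by
      have h := Matrix.posSemidef_vecMulVec_self_star (Z v)
      rw [star_trivial] at h
      exact h.smul (inv_nonneg.2 hZ.diag_nonneg)
    have hWrank : W.rank ≤ 1 := by
      have : W = Matrix.vecMulVec ((Z v v)⁻¹ • Z v) (Z v) := by
        ext i j; simp [W, Matrix.vecMulVec_apply, mul_assoc]
      rw [this]
      exact Matrix.rank_vecMulVec_le _ _
    refine ⟨fun k => Y k + if k = k₀ then W else 0, ?_, ?_, ?_, ?_⟩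
    · intro k
      dsimp only
      split_ifs
      · exact (hY k).add hWpsd
      · simpa using hY k
    · intro k i j hij
      by_cases h : Y k i j = 0
      · by_cases hk : k = k₀
        · subst hk
          have hij' : Z v i ≠ 0 ∧ Z v j ≠ 0 := by
            constructor <;> intro h' <;> simp [h, W, Matrix.vecMulVec_apply, h'] at hij
          exact ⟨hk₀ (by simpa using hij'.1), hk₀ (by simpa using hij'.2)⟩
        · simp [h, hk] at hij
      · exact hYsupp k i j h
    · rw [Finset.sum_add_distrib, ← hYsum]
      simp [pivot, W]
    · calc ∑ k, (Y k + if k = k₀ then W else 0).rank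
          ≤ ∑ k, ((Y k).rank + if k = k₀ then 1 else 0) := by
            refine Finset.sum_le_sum fun k _ => (rank_add_le_rank_add_rank _ _).trans ?_
            split_ifs <;> simp [hWrank]
        _ = ∑ k, (Y k).rank + 1 := by simp [Finset.sum_add_distrib]
        _ ≤ (pivot Z v).rank + 1 := by omega
        _ ≤ Z.rank := rank_pivot_lt hZ hv

lemma exists_maximal_clique {V : Type*} [Fintype V] {E : V → V → Prop} (D : Finset V)
    (hD : IsGraphClique E D) : ∃ M, IsMaximalGraphClique E M ∧ D ⊆ M := by
  classical
  obtain ⟨M, hDM, hM⟩ := (Set.toFinite {D | IsGraphClique E D}).exists_le_maximal hD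
  exact ⟨M, ⟨hM.1, fun D' hD' h => le_antisymm (hM.2 hD' h) h⟩, hDM⟩

/-- Inflating the `C × C` block of a matrix supported on `C × C` recovers the matrix. -/
lemma inflate_submatrix {n : ℕ} (C : Finset (Fin n)) (Y : Matrix (Fin n) (Fin n) ℝ)
    (hY : ∀ i j, Y i j ≠ 0 → i ∈ C ∧ j ∈ C) :
    (cliqueMat C)ᵀ * Y.submatrix (fun i => (C.orderIsoOfFin rfl i : Fin n))
      (fun i => (C.orderIsoOfFin rfl i : Fin n)) * cliqueMat C = Y := by
  ext i j
  have hsum : ∀ (f : Fin n → ℝ) (i : Fin n), (∀ i, f i ≠ 0 → i ∈ C) →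
      ∑ a : Fin C.card, (if (↑(C.orderIsoOfFin rfl a) : Fin n) = i then
        f ↑(C.orderIsoOfFin rfl a) else 0) = f i := by
    intro f i hf
    by_cases hi : i ∈ C
    · obtain ⟨b, hb⟩ := (C.orderIsoOfFin rfl).surjective ⟨i, hi⟩
      rw [Finset.sum_eq_single b]
      · simp [hb]
      · intro a _ hab
        rw [if_neg]
        intro h
        exact hab ((C.orderIsoOfFin rfl).injective (Subtype.ext (by rw [h, hb])))
      · simp
    · have h0 : f i = 0 := by_contra fun h => hi (hf i h)
      rw [h0]
      refine Finset.sum_eq_zero fun a _ => ?_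
      split_ifs with h
      · rw [h, h0]
      · rfl
  simp only [Matrix.mul_apply, Matrix.transpose_apply, cliqueMat, Matrix.of_apply,
    Matrix.submatrix_apply, ite_mul, mul_ite, one_mul, mul_one, zero_mul, mul_zero]
  have h1 : ∀ b : Fin n, ∑ a : Fin C.card, (if (↑(C.orderIsoOfFin rfl a) : Fin n) = i then
      Y ↑(C.orderIsoOfFin rfl a) b else 0) = Y i b :=
    fun b => hsum (fun a => Y a b) i fun a h => (hY a b h).1
  simp only [h1]
  exact hsum (fun b => Y i b) j fun b h => (hY i b h).2

/-- **Rank-constrained chordal decomposition (Kakimura).**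
If `G(V,E)` is chordal with maximal cliques `C 1, …, C t` and `Z ∈ S^n_+(E,0)`, then
`Z = ∑ k, E_{C_k}ᵀ Z_k E_{C_k}` with `Z_k ⪰ 0` and `rank Z = ∑ k, rank Z_k`. -/
theorem chordal_decomposition_rank {n t : ℕ} (E : Fin n → Fin n → Prop)
    (hsymm : EdgeSymm E) (hloop : HasSelfLoops E) (hchordal : IsChordalRel E)
    (C : Fin t → Finset (Fin n)) (hinj : Function.Injective C)
    (hmax : ∀ k, IsMaximalGraphClique E (C k))
    (hall : ∀ D : Finset (Fin n), IsMaximalGraphClique E D → ∃ k, C k = D)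
    (Z : Matrix (Fin n) (Fin n) ℝ) (hZ : HasSparsity E Z) (hpsd : Z.PosSemidef) :
    ∃ Zk : (k : Fin t) → Matrix (Fin (C k).card) (Fin (C k).card) ℝ,
      (∀ k, (Zk k).PosSemidef) ∧
      Z = ∑ k, (cliqueMat (C k))ᵀ * Zk k * cliqueMat (C k) ∧
      Z.rank = ∑ k, (Zk k).rank := by
  have hC : ∀ D : Finset (Fin n), IsGraphClique E D → ∃ k, D ⊆ C k := by
    intro D hD
    obtain ⟨M, hM, hDM⟩ := exists_maximal_clique D hD
    obtain ⟨k, rfl⟩ := hall M hM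
    exact ⟨k, hDM⟩
  obtain ⟨Y, hY, hYsupp, hYsum, hYrank⟩ := exists_decomposition hsymm hloop hchordal C hC
    Finset.univ Z hpsd fun i j hij =>
      ⟨Finset.mem_univ _, Finset.mem_univ _, by_contra fun h => hij (hZ.2 i j h)⟩
  have hinf := fun k => inflate_submatrix (C k) (Y k) (hYsupp k)
  refine ⟨fun k => (Y k).submatrix (fun i => ((C k).orderIsoOfFin rfl i : Fin n))
    (fun i => ((C k).orderIsoOfFin rfl i : Fin n)), fun k => (hY k).submatrix _, ?_, ?_⟩
  · simp only [hinf]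
    exact hYsum
  · apply le_antisymm
    · calc Z.rank ≤ ∑ k, (Y k).rank := by
            conv_lhs => rw [hYsum]
            exact rank_sum_le_sum_rank _ _
        _ ≤ _ := by
            refine Finset.sum_le_sum fun k _ => ?_
            conv_lhs => rw [← hinf k]
            exact (Matrix.rank_mul_le_left _ _).trans (Matrix.rank_mul_le_right _ _)
    · exact (Finset.sum_le_sum fun k _ => Matrix.rank_submatrix_le _ _ _).trans hYrank
end

section
/- Let G be a chordal graph on vertices {1,…,p} with edge set E and maximal cliques C_1,…,C_t, and let α = {α_1,…,α_p} be a partition of n. Then a block-sparse symmetric matrix X ∈ S^n_α(E,0) admits a positive semidefinite completion (i.e., X ∈ S^n_{α,+}(E,?)) if and only if E_{C_k,α} X E_{C_k,α}^T ∈ S^{s(α,k)}_+ for every k = 1,…,t. -/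
/-!
A chordal graph that is not complete can be cut along a clique: among all ways of covering the
vertex set by two sets `P`, `Q` with a prescribed vertex `a` only in `P`, a prescribed non-neighbour
`b` only in `Q`, and no edges between `P \ Q` and `Q \ P`, one with `P ∩ Q` of least cardinality has
a clique as intersection (Dirac). Indeed, by minimality each vertex of `P ∩ Q` is adjacent to the
component of `a` in `P \ Q`, and to that of `b` in `Q \ P`, so two non-adjacent vertices `x`, `y` of
`P ∩ Q` would be joined by a shortest path through either side; the two paths form a chordless cycle
of length at least 4 (`clique_separation`).

A positive semidefinite completion is the same thing as a family of vectors, one per row, whose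
inner products reproduce the prescribed entries. On a clique such a family exists because a positive
semidefinite matrix is a Gram matrix. If families `u` on `P` and `w` on `Q` are given, they have the
same Gram matrix on the clique `P ∩ Q`, so some linear isometry of the ambient finite-dimensional
space carries `u` to `w` there (`exists_isometry_of_inner_eq`); after applying it to `u`, the two
families glue to one on `P ∪ Q`. Induction on the vertex set gives the hard implication
(`exists_gram_family`). The easy one only uses that principal submatrices of positive semidefinite
matrices are positive semidefinite.
-/

open Finset Matrix

/-- The index set `{1,…,n}` split into `p` blocks of sizes `α 1, …, α p`. -/
abbrev BlockIdx {p : ℕ} (α : Fin p → ℕ) := (i : Fin p) × Fin (α i)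

/-- `Z ∈ S^n_α(E,0)`: symmetric, with the `(i,j)` block vanishing whenever `(i,j) ∉ E`. -/
def BlockSparsity {p : ℕ} (α : Fin p → ℕ) (E : Fin p → Fin p → Prop)
    (Z : Matrix (BlockIdx α) (BlockIdx α) ℝ) : Prop :=
  Z.IsSymm ∧ ∀ i j : Fin p, ¬ E i j → ∀ (a : Fin (α i)) (b : Fin (α j)), Z ⟨i, a⟩ ⟨j, b⟩ = 0

/-- The block 0/1 matrix `E_{C,α}` selecting the rows whose block index lies in `C`. -/
def blockCliqueMat {p : ℕ} (α : Fin p → ℕ) (C : Finset (Fin p)) :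
    Matrix {x : BlockIdx α // x.1 ∈ C} (BlockIdx α) ℝ :=
  Matrix.of fun a b => if a.1 = b then 1 else 0

/-- `X ∈ S^n_{α,+}(E,?)`: the block-sparse matrix `X` admits a positive semidefinite
completion agreeing with `X` on all blocks indexed by `E`. -/
def HasBlockPSDCompletion {p : ℕ} (α : Fin p → ℕ) (E : Fin p → Fin p → Prop)
    (X : Matrix (BlockIdx α) (BlockIdx α) ℝ) : Prop :=
  ∃ Xb : Matrix (BlockIdx α) (BlockIdx α) ℝ, Xb.PosSemidef ∧
    ∀ i j : Fin p, E i j → ∀ (a : Fin (α i)) (b : Fin (α j)), Xb ⟨i, a⟩ ⟨j, b⟩ = X ⟨i, a⟩ ⟨j, b⟩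

/-! ### Paths through a set and chordless cycles -/

/-- There is a walk `c 0, …, c m` with `m > 0` steps along `E` from `x` to `y` all of whose
intermediate vertices lie in `T`. Values of `c` beyond `m` are irrelevant. -/
def PathOfLength {V : Type*} (E : V → V → Prop) (T : Set V) (x y : V) (m : ℕ) (c : ℕ → V) : Prop :=
  0 < m ∧ c 0 = x ∧ c m = y ∧ (∀ i < m, E (c i) (c (i + 1))) ∧ ∀ i, 0 < i → i < m → c i ∈ T

/-- `x` and `y` are joined by a walk whose intermediate vertices lie in `T`. -/
def PathIn {V : Type*} (E : V → V → Prop) (T : Set V) (x y : V) : Prop :=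
  ∃ m c, PathOfLength E T x y m c

lemma PathIn.snoc {V : Type*} {E : V → V → Prop} {T : Set V} {x v w : V}
    (h : PathIn E T x v) (hv : v ∈ T) (hvw : E v w) : PathIn E T x w := by
  obtain ⟨m, c, hm, h0, hc, hE, hT⟩ := h
  refine ⟨m + 1, fun k => if k ≤ m then c k else w, by omega, by simp [h0], by simp, ?_, ?_⟩
  · intro i hi
    rcases Nat.lt_succ_iff_lt_or_eq.mp hi with h | rfl
    · simpa [h.le, Nat.succ_le_of_lt h] using hE i h
    · simpa [hc] using hvw
  · intro i hi him
    rcases Nat.lt_succ_iff_lt_or_eq.mp him with h | rfl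
    · simpa [h.le] using hT i hi h
    · simpa [hc] using hv

/-- A shortest walk is an induced path of length at least 2. -/
lemma PathIn.exists_induced {V : Type*} {E : V → V → Prop} {T : Set V} {x y : V}
    (h : PathIn E T x y) (hxy : ¬ E x y) :
    ∃ m c, PathOfLength E T x y m c ∧ 2 ≤ m ∧
      ∀ i j, i + 2 ≤ j → j ≤ m → ¬ E (c i) (c j) := by
  classical
  have hex : ∃ m, ∃ c, PathOfLength E T x y m c := h
  obtain ⟨c, hc⟩ := Nat.find_spec hex
  have hmin : ∀ m', m' < Nat.find hex → ¬ ∃ c, PathOfLength E T x y m' c :=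
    fun m' hm' => Nat.find_min hex hm'
  generalize Nat.find hex = m at hc hmin
  have hc' := hc
  obtain ⟨hm, h0, hcm, hE, hT⟩ := hc'
  refine ⟨m, c, hc, ?_, ?_⟩
  · by_contra hlt
    obtain rfl : m = 1 := by omega
    exact hxy (by simpa [h0, hcm] using hE 0 one_pos)
  · intro i j hij hjm hEij
    -- A chord `c i, c j` allows the walk to skip the vertices strictly between `i` and `j`.
    obtain ⟨s, rfl⟩ : ∃ s, j = i + 1 + s := ⟨j - (i + 1), by omega⟩
    refine hmin (m - s) (by omega) ⟨fun k => if k ≤ i then c k else c (k + s), by omega,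
      by simp [h0], ?_, ?_, ?_⟩
    · have : ¬ m - s ≤ i := by omega
      have e : m - s + s = m := by omega
      simp [this, e, hcm]
    · intro k hk
      rcases lt_trichotomy k i with h | rfl | h
      · simpa [h.le, Nat.succ_le_of_lt h] using hE k (by omega)
      · simpa using hEij
      · have h1 : ¬ k ≤ i := by omega
        have h2 : ¬ k + 1 ≤ i := by omega
        have e : k + 1 + s = k + s + 1 := by omega
        simpa [h1, h2, e] using hE (k + s) (by omega)
    · intro k hk0 hkm
      by_cases h : k ≤ i
      · simpa [h] using hT k hk0 (by omega)
      · simpa [h] using hT (k + s) (by omega) (by omega)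

/-- In a chordal graph, vertices joined by paths through two disjoint sets without edges between
them are adjacent. -/
lemma adj_of_two_paths {V : Type*} {E : V → V → Prop} (hsymm : EdgeSymm E) (hloop : HasSelfLoops E)
    (hch : IsChordalRel E) {A B : Set V} (hAB : ∀ u ∈ A, ∀ v ∈ B, ¬ E u v) {x y : V}
    (hA : PathIn E A x y) (hB : PathIn E B x y) : E x y := by
  by_contra hxy
  obtain ⟨m, f, ⟨-, f0, fm, fE, fA⟩, hm, find⟩ := hA.exists_induced hxy
  obtain ⟨l, g, ⟨-, g0, gl, gE, gB⟩, hl, gind⟩ := hB.exists_induced hxy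
  obtain ⟨k, hk⟩ : ∃ k, m + l = k + 4 := ⟨m + l - 4, by omega⟩
  -- Traverse the first path forwards and return along the second one.
  set d : ℕ → V := fun i => if i ≤ m then f i else g (m + l - i) with hd
  have dlo : ∀ i, i ≤ m → d i = f i := fun i hi => by simp [hd, hi]
  have dhi : ∀ i, m ≤ i → d i = g (m + l - i) := by
    intro i hi
    rcases hi.eq_or_lt with rfl | hi
    · simp [hd, fm, gl]
    · simp [hd, not_le.mpr hi]
  have d0 : d 0 = x := by rw [dlo 0 (by omega), f0]
  have dstep : ∀ i, i < m + l → E (d i) (d (i + 1)) := by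
    intro i hi
    by_cases h : i < m
    · rw [dlo i h.le, dlo (i + 1) h]; exact fE i h
    · rw [dhi i (by omega), dhi (i + 1) (by omega)]
      have := gE (m + l - (i + 1)) (by omega)
      rw [show m + l - (i + 1) + 1 = m + l - i by omega] at this
      exact hsymm _ _ this
  have dlast : d (m + l) = x := by rw [dhi _ (by omega), Nat.sub_self, g0]
  have dchord : ∀ i j, i + 2 ≤ j → j < m + l → ¬ (i = 0 ∧ j + 1 = m + l) → ¬ E (d i) (d j) := by
    intro i j hij hj hne hE
    by_cases h1 : j ≤ m
    · rw [dlo i (by omega), dlo j h1] at hE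
      exact find i j hij h1 hE
    by_cases h2 : m ≤ i
    · rw [dhi i h2, dhi j (by omega)] at hE
      exact gind (m + l - j) (m + l - i) (by omega) (by omega) (hsymm _ _ hE)
    rcases Nat.eq_zero_or_pos i with rfl | hi
    · rw [d0, dhi j (by omega), ← g0] at hE
      exact gind 0 (m + l - j) (by omega) (by omega) hE
    · rw [dlo i (by omega), dhi j (by omega)] at hE
      exact hAB _ (fA i hi (by omega)) _ (gB _ (by omega) (by omega)) hE
  -- A repeated vertex would, through the self-loops and the steps of the cycle, be a chord.
  have dinj : ∀ i j, i < j → j < m + l → d i ≠ d j := by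
    intro i j hij hj he
    by_cases h2 : i + 2 ≤ j
    · by_cases h3 : i = 0 ∧ j + 1 = m + l
      · obtain ⟨rfl, h3⟩ := h3
        have := dstep 0 (by omega)
        rw [he] at this
        exact dchord 1 j (by omega) hj (by omega) (hsymm _ _ this)
      · exact dchord i j h2 hj h3 (he ▸ hloop _)
    · obtain rfl : j = i + 1 := by omega
      by_cases h3 : i + 2 < m + l
      · by_cases h4 : i = 0 ∧ i + 2 + 1 = m + l
        · omega
        · exact dchord i (i + 2) le_rfl h3 h4 (he ▸ dstep (i + 1) hj)
      · have := dstep (i - 1) (by omega)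
        rw [show i - 1 + 1 = i by omega, he] at this
        exact dchord (i - 1) (i + 1) (by omega) hj (by omega) this
  obtain ⟨i, j, hij, hj, hi, hE⟩ := hch k (fun i => d i.val) (by
      intro i j h
      by_contra hne
      rcases lt_or_gt_of_ne (Fin.val_ne_of_ne hne) with h' | h'
      · exact dinj _ _ h' (by omega) h
      · exact dinj _ _ h' (by omega) h.symm) (by
      intro i
      have hs := dstep i.val (by omega)
      have hv := Fin.val_add_one i
      rw [hv]
      split_ifs with hi
      · subst hi
        rw [show (Fin.last (k + 3)).val + 1 = m + l by simp; omega, dlast] at hs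
        rwa [d0]
      · exact hs)
  have hiv := Fin.val_add_one i
  have hjv := Fin.val_add_one j
  rw [Ne, Fin.ext_iff] at hij hi hj
  rw [hiv] at hj
  rw [hjv] at hi
  have hlast : (Fin.last (k + 3)).val = k + 3 := rfl
  simp only [Fin.ext_iff, hlast] at hi hj
  split_ifs at hi hj <;> rcases lt_or_gt_of_ne hij with h' | h'
  all_goals first
    | exact dchord _ _ (by omega) (by omega) (by omega) hE
    | exact dchord _ _ (by omega) (by omega) (by omega) (hsymm _ _ hE)

/-! ### Clique separators of chordal graphs -/

/-- The sets `P`, `Q` cover `W`, with `a` only in `P`, `b` only in `Q`, and no edge joins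
`P \ Q` to `Q \ P`. -/
structure IsSeparation {V : Type*} (E : V → V → Prop) (W : Finset V) (a b : V)
    (P Q : Finset V) : Prop where
  cover : ∀ v, v ∈ W ↔ v ∈ P ∨ v ∈ Q
  left : a ∈ P ∧ a ∉ Q
  right : b ∈ Q ∧ b ∉ P
  no_edge : ∀ u v, u ∈ P → u ∉ Q → v ∈ Q → v ∉ P → ¬ E u v

lemma IsSeparation.symm {V : Type*} {E : V → V → Prop} (hsymm : EdgeSymm E) {W : Finset V}
    {a b : V} {P Q : Finset V} (h : IsSeparation E W a b P Q) : IsSeparation E W b a Q P :=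
  ⟨fun v => (h.cover v).trans or_comm, h.right, h.left,
    fun u v h1 h2 h3 h4 hE => h.no_edge v u h3 h4 h1 h2 (hsymm _ _ hE)⟩

/-- In a separation with smallest intersection, any two vertices of the intersection are joined
through `P \ Q`: both have a neighbour in the component of `a`, since otherwise the vertex without
one could be dropped from the intersection. -/
lemma IsSeparation.pathIn {V : Type*} [DecidableEq V] {E : V → V → Prop} (hsymm : EdgeSymm E)
    {W : Finset V} {a b : V} {P Q : Finset V} (h : IsSeparation E W a b P Q)
    (hmin : ∀ P' Q', IsSeparation E W a b P' Q' → (P ∩ Q).card ≤ (P' ∩ Q').card)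
    {x y : V} (hx : x ∈ P ∩ Q) (hy : y ∈ P ∩ Q) : PathIn E {v | v ∈ P ∧ v ∉ Q} x y := by
  classical
  set T : Set V := {v | v ∈ P ∧ v ∉ Q} with hT
  let r : V → V → Prop := fun u v => E u v ∧ u ∈ T ∧ v ∈ T
  have hr : Std.Symm r := ⟨fun u v h => ⟨hsymm _ _ h.1, h.2.2, h.2.1⟩⟩
  have hreach : ∀ v, Relation.ReflTransGen r a v → v ∈ T := by
    intro v hv
    rcases Relation.ReflTransGen.cases_tail hv with rfl | ⟨w, -, hw⟩
    · exact h.left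
    · exact hw.2.2
  have key : ∀ z ∈ P ∩ Q, ∃ u, Relation.ReflTransGen r a u ∧ E z u := by
    intro z hz
    by_contra! hno
    let K : Finset V := W.filter fun v => Relation.ReflTransGen r a v
    have hK : ∀ v, v ∈ K ↔ Relation.ReflTransGen r a v := fun v => by
      simp only [K, Finset.mem_filter, and_iff_right_iff_imp]
      exact fun hv => (h.cover v).mpr (Or.inl (hreach v hv).1)
    have hKT : ∀ v ∈ K, v ∈ P ∧ v ∉ Q := fun v hv => hreach v ((hK v).mp hv)
    have hsep : IsSeparation E W a b (K ∪ (P ∩ Q).erase z) (W \ K) := by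
      refine ⟨?_, ?_, ?_, ?_⟩
      · intro v
        have := h.cover v
        have := hKT v
        simp only [mem_union, mem_erase, mem_inter, mem_sdiff]
        tauto
      · have := (hK a).mpr .refl
        simp [this]
      · have h1 : b ∉ K := fun hb => h.right.2 (hKT b hb).1
        have h2 := (h.cover b).mpr (Or.inr h.right.1)
        simp [h1, h2, h.right.2]
      · intro u v hu1 hu2 hv1 hv2 hE
        have huK : u ∈ K := by
          by_contra huK
          simp only [mem_union, mem_erase, mem_inter, mem_sdiff, huK] at hu1 hu2
          have := h.cover u
          tauto
        have hvz : v ≠ z := by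
          rintro rfl
          exact hno u ((hK u).mp huK) (hsymm _ _ hE)
        simp only [mem_union, mem_erase, mem_inter, mem_sdiff] at hv1 hv2
        have hvW := (h.cover v).mp hv1.1
        by_cases hvP : v ∈ P
        · by_cases hvQ : v ∈ Q
          · tauto
          · exact hv1.2 ((hK v).mpr (((hK u).mp huK).tail ⟨hE, hKT u huK, hvP, hvQ⟩))
        · exact h.no_edge u v (hKT u huK).1 (hKT u huK).2 (by tauto) hvP hE
    have hle := hmin _ _ hsep
    have hsub : (K ∪ (P ∩ Q).erase z) ∩ (W \ K) ⊆ (P ∩ Q).erase z := by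
      intro v hv
      simp only [mem_union, mem_inter, mem_sdiff] at hv
      tauto
    exact absurd (hle.trans (Finset.card_le_card hsub))
      (not_le.mpr (Finset.card_erase_lt_of_mem hz))
  obtain ⟨u, hu, hxu⟩ := key x hx
  obtain ⟨v, hv, hyv⟩ := key y hy
  have huv : Relation.ReflTransGen r u v :=
    (Relation.ReflTransGen.stdSymm.symm _ _ hu).trans hv
  have hpath : ∀ v, Relation.ReflTransGen r u v → PathIn E T x v := by
    intro v huv
    induction huv with
    | refl =>
      exact ⟨1, fun k => if k = 0 then x else u, one_pos, by simp, by simp,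
        fun i hi => by simpa [Nat.lt_one_iff.mp hi] using hxu, fun i h1 h2 => by omega⟩
    | tail _ hbc ih => exact ih.snoc hbc.2.1 hbc.1
  exact (hpath v huv).snoc (hreach v hv) (hsymm _ _ hyv)

/-- Dirac: a set of vertices of a chordal graph that is not a clique is covered by two proper
subsets meeting in a clique, with no edge between their differences. -/
lemma clique_separation {V : Type*} [DecidableEq V] {E : V → V → Prop} (hsymm : EdgeSymm E)
    (hloop : HasSelfLoops E) (hch : IsChordalRel E) {W : Finset V} (hW : ¬ IsGraphClique E W) :
    ∃ a b P Q, IsSeparation E W a b P Q ∧ IsGraphClique E (P ∩ Q) := by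
  classical
  simp only [IsGraphClique, not_forall] at hW
  obtain ⟨a, ha, b, hb, hab⟩ := hW
  have hne : a ≠ b := fun h => hab (h ▸ hloop a)
  have hex : ∃ n P Q, IsSeparation E W a b P Q ∧ (P ∩ Q).card = n := by
    refine ⟨_, W.erase b, W.erase a, ⟨fun v => ?_, ?_, ?_, ?_⟩, rfl⟩
    · simp only [mem_erase]
      by_cases h : v = a
      · subst h; simp [hne]
      · simp [h]
    · simp [ha, hne]
    · simp [hb, hne.symm]
    · intro u v h1 h2 h3 h4 hE
      simp only [mem_erase] at h1 h2 h3 h4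
      obtain rfl : u = a := by tauto
      obtain rfl : v = b := by tauto
      exact hab hE
  obtain ⟨P, Q, hPQ, hcard⟩ := Nat.find_spec hex
  have hmin : ∀ P' Q', IsSeparation E W a b P' Q' → (P ∩ Q).card ≤ (P' ∩ Q').card :=
    fun P' Q' h => hcard ▸ Nat.find_min' hex ⟨P', Q', h, rfl⟩
  refine ⟨a, b, P, Q, hPQ, fun x hx y hy => ?_⟩
  refine adj_of_two_paths hsymm hloop hch (A := {v | v ∈ P ∧ v ∉ Q}) (B := {v | v ∈ Q ∧ v ∉ P})
    (fun u hu v hv => hPQ.no_edge u v hu.1 hu.2 hv.1 hv.2) (hPQ.pathIn hsymm hmin hx hy) ?_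
  refine (hPQ.symm hsymm).pathIn hsymm (fun P' Q' h => ?_) (by rwa [inter_comm])
    (by rwa [inter_comm])
  rw [inter_comm Q P, inter_comm P' Q']
  exact hmin _ _ (h.symm hsymm)

/-! ### Gram families -/

/-- Two families with the same Gram matrix differ by a linear isometry of the ambient space. -/
lemma exists_isometry_of_inner_eq {H ι : Type*} [NormedAddCommGroup H] [InnerProductSpace ℝ H]
    [FiniteDimensional ℝ H] [Fintype ι] (f g : ι → H)
    (h : ∀ i j, inner ℝ (f i) (f j) = inner ℝ (g i) (g j)) :
    ∃ T : H →ₗᵢ[ℝ] H, ∀ i, T (f i) = g i := by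
  classical
  let F : (ι → ℝ) →ₗ[ℝ] H := Fintype.linearCombination ℝ f
  let G : (ι → ℝ) →ₗ[ℝ] H := Fintype.linearCombination ℝ g
  have hnorm : ∀ c, ‖G c‖ = ‖F c‖ := by
    intro c
    have : ‖G c‖ ^ 2 = ‖F c‖ ^ 2 := by
      rw [← real_inner_self_eq_norm_sq, ← real_inner_self_eq_norm_sq]
      simp only [F, G, Fintype.linearCombination_apply, sum_inner, inner_sum,
        real_inner_smul_left, real_inner_smul_right, h]
    exact (sq_eq_sq₀ (norm_nonneg _) (norm_nonneg _)).mp this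
  have hF : ∀ i, F (Pi.single i 1) = f i := fun i => by
    simp [F, Fintype.linearCombination_apply_single]
  have hG : ∀ i, G (Pi.single i 1) = g i := fun i => by
    simp [G, Fintype.linearCombination_apply_single]
  -- The isometry on the span of `f`: pick coefficients with respect to `f`, use them with `g`.
  obtain ⟨s, hs⟩ := F.rangeRestrict.exists_rightInverse_of_surjective F.range_rangeRestrict
  have hs' : ∀ v : LinearMap.range F, F (s v) = v := fun v =>
    congrArg Subtype.val (LinearMap.congr_fun hs v)
  let L : LinearMap.range F →ₗᵢ[ℝ] H :=
    ⟨G ∘ₗ s, fun v => by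
      rw [LinearMap.comp_apply, hnorm, hs']; rfl⟩
  refine ⟨L.extend, fun i => ?_⟩
  have hL := L.extend_apply ⟨f i, ⟨Pi.single i 1, hF i⟩⟩
  rw [show L.extend (f i) = _ from hL]
  change G (s _) = g i
  rw [← hG i, ← sub_eq_zero, ← map_sub, ← norm_eq_zero, hnorm, map_sub, hs', hF, sub_self,
    norm_zero]

/-- A positive semidefinite matrix is the Gram matrix of a family of vectors. -/
lemma exists_gram_of_posSemidef {ι : Type*} [Fintype ι] {M : Matrix ι ι ℝ} (hM : M.PosSemidef) :
    ∃ u : ι → EuclideanSpace ℝ ι, ∀ x y, inner ℝ (u x) (u y) = M x y := by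
  classical
  open scoped MatrixOrder in
  obtain ⟨B, hB⟩ := CStarAlgebra.nonneg_iff_eq_star_mul_self.mp hM.nonneg
  refine ⟨fun x => WithLp.toLp 2 fun k => B k x, fun x y => ?_⟩
  rw [hB]
  simp [PiLp.inner_apply, Matrix.mul_apply, Matrix.star_eq_conjTranspose, mul_comm]

lemma blockCliqueMat_mul_mul {p : ℕ} (α : Fin p → ℕ) (C : Finset (Fin p))
    (X : Matrix (BlockIdx α) (BlockIdx α) ℝ) :
    blockCliqueMat α C * X * (blockCliqueMat α C)ᵀ = X.submatrix Subtype.val Subtype.val := by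
  ext a b
  simp [blockCliqueMat, Matrix.mul_apply]

/-- If all clique submatrices of `X` indexed by maximal cliques are positive semidefinite, then on
every vertex set `W` the entries of `X` at edges are inner products of vectors. -/
lemma exists_gram_family {p t : ℕ} (α : Fin p → ℕ)
    (E : Fin p → Fin p → Prop)
    (hsymm : EdgeSymm E) (hloop : HasSelfLoops E) (hchordal : IsChordalRel E)
    (C : Fin t → Finset (Fin p))
    (hall : ∀ D : Finset (Fin p), IsMaximalGraphClique E D → ∃ k, C k = D)
    (X : Matrix (BlockIdx α) (BlockIdx α) ℝ)
    (hX : ∀ k, (blockCliqueMat α (C k) * X * (blockCliqueMat α (C k))ᵀ).PosSemidef)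
    (W : Finset (Fin p)) :
    ∃ u : BlockIdx α → EuclideanSpace ℝ (BlockIdx α), ∀ x y : BlockIdx α,
      x.1 ∈ W → y.1 ∈ W → E x.1 y.1 → inner ℝ (u x) (u y) = X x y := by
  classical
  induction W using Finset.strongInduction with
  | H W ih =>
    by_cases hW : IsGraphClique E W
    · obtain ⟨D, hWD, hD⟩ := Finite.exists_le_maximal (p := IsGraphClique E) hW
      obtain ⟨k, rfl⟩ := hall D ⟨hD.1, fun D' hD' hle => le_antisymm (hD.2 hD' hle) hle⟩
      -- Pad the clique submatrix with zeros so that its Gram vectors live in the full space.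
      obtain ⟨u, hu⟩ := exists_gram_of_posSemidef
        ((hX k).conjTranspose_mul_mul_same (blockCliqueMat α (C k)))
      refine ⟨u, fun x y hx hy _ => ?_⟩
      have hsel : ∀ (M : Matrix {x : BlockIdx α // x.1 ∈ C k} {x : BlockIdx α // x.1 ∈ C k} ℝ),
          ((blockCliqueMat α (C k))ᴴ * M * blockCliqueMat α (C k)) x y
            = M ⟨x, hWD hx⟩ ⟨y, hWD hy⟩ := by
        intro M
        have e : ∀ (a : {x : BlockIdx α // x.1 ∈ C k}) (z : BlockIdx α) (hz : z.1 ∈ C k),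
            a.1 = z ↔ a = ⟨z, hz⟩ := fun a z hz => by rw [Subtype.ext_iff]
        simp [blockCliqueMat, Matrix.mul_apply, e _ x (hWD hx), e _ y (hWD hy)]
      rw [hu, hsel, blockCliqueMat_mul_mul]
      rfl
    · obtain ⟨a, b, P, Q, hPQ, hcl⟩ := clique_separation hsymm hloop hchordal hW
      have hP : P ⊂ W := ⟨fun v hv => (hPQ.cover v).mpr (Or.inl hv), fun hle =>
        hPQ.right.2 (hle ((hPQ.cover b).mpr (Or.inr hPQ.right.1)))⟩
      have hQ : Q ⊂ W := ⟨fun v hv => (hPQ.cover v).mpr (Or.inr hv), fun hle =>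
        hPQ.left.2 (hle ((hPQ.cover a).mpr (Or.inl hPQ.left.1)))⟩
      obtain ⟨u, hu⟩ := ih P hP
      obtain ⟨w, hw⟩ := ih Q hQ
      obtain ⟨T, hT⟩ := exists_isometry_of_inner_eq
        (fun z : {z : BlockIdx α // z.1 ∈ P ∩ Q} => u z.1) (fun z => w z.1) (by
          rintro ⟨x, hx⟩ ⟨y, hy⟩
          have hE := hcl _ hx _ hy
          rw [mem_inter] at hx hy
          exact (hu x y hx.1 hy.1 hE).trans (hw x y hx.2 hy.2 hE).symm)
      have hTw : ∀ z : BlockIdx α, z.1 ∈ Q → (if z.1 ∈ P then T (u z) else w z) = w z := by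
        intro z hz
        split_ifs with hzP
        · exact hT ⟨z, mem_inter.mpr ⟨hzP, hz⟩⟩
        · rfl
      refine ⟨fun z => if z.1 ∈ P then T (u z) else w z, fun x y hx hy hE => ?_⟩
      have hx' := (hPQ.cover _).mp hx
      have hy' := (hPQ.cover _).mp hy
      by_cases hPP : x.1 ∈ P ∧ y.1 ∈ P
      · simp only [hPP.1, hPP.2, if_true, LinearIsometry.inner_map_map]
        exact hu x y hPP.1 hPP.2 hE
      · have hQQ : x.1 ∈ Q ∧ y.1 ∈ Q := by
          have h1 := hPQ.no_edge x.1 y.1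
          have h2 := hPQ.no_edge y.1 x.1
          have h3 := hsymm _ _ hE
          tauto
        dsimp only
        rw [hTw x hQQ.1, hTw y hQQ.2]
        exact hw x y hQQ.1 hQQ.2 hE

/-- **Chordal block-completion.** Let `G` be a chordal graph on `{1,…,p}` with maximal
cliques `C 1, …, C t` and let `α` be a partition of `n`. Then `X ∈ S^n_α(E,0)` admits a
positive semidefinite completion iff every principal block-submatrix
`E_{C_k,α} X E_{C_k,α}ᵀ` is positive semidefinite. -/
theorem chordal_block_completion {n p t : ℕ} (α : Fin p → ℕ)
    (hpos : ∀ i, 0 < α i) (hsum : ∑ i, α i = n)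
    (E : Fin p → Fin p → Prop)
    (hsymm : EdgeSymm E) (hloop : HasSelfLoops E) (hchordal : IsChordalRel E)
    (C : Fin t → Finset (Fin p)) (hinj : Function.Injective C)
    (hmax : ∀ k, IsMaximalGraphClique E (C k))
    (hall : ∀ D : Finset (Fin p), IsMaximalGraphClique E D → ∃ k, C k = D)
    (X : Matrix (BlockIdx α) (BlockIdx α) ℝ) (hX : BlockSparsity α E X) :
    HasBlockPSDCompletion α E X ↔
      ∀ k, (blockCliqueMat α (C k) * X * (blockCliqueMat α (C k))ᵀ).PosSemidef := by
  constructor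
  · rintro ⟨Y, hY, hYX⟩ k
    have : blockCliqueMat α (C k) * X * (blockCliqueMat α (C k))ᵀ
        = Y.submatrix Subtype.val Subtype.val := by
      rw [blockCliqueMat_mul_mul]
      ext ⟨⟨i, a⟩, hi⟩ ⟨⟨j, b⟩, hj⟩
      exact (hYX i j ((hmax k).1 i hi j hj) a b).symm
    rw [this]
    exact hY.submatrix _
  · intro h
    obtain ⟨u, hu⟩ := exists_gram_family α E hsymm hloop hchordal C hall X h Finset.univ
    exact ⟨Matrix.gram ℝ u, Matrix.posSemidef_gram ℝ u, fun i j hij a b =>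
      hu ⟨i, a⟩ ⟨j, b⟩ (mem_univ _) (mem_univ _) hij⟩
end
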